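/- For every τ in the complex upper half plane, g_{1,0}(τ)·g_{1,1}(τ)·g_{1,2}(τ) = E₆(τ); moreover g_{1,j}(−j + i) = 0 for j ∈ {0,1,2}, and g_{1,0}(−1/τ) = τ²·g_{1,0}(τ) while g_{1,j}(−1/τ) = −τ²·g_{1,j}(τ) for j ∈ {1,2}. -/

import Mathlib

open Complex

/-- `q = exp(2πiτ)`. -/
noncomputable def qq (τ : ℂ) : ℂ := Complex.exp (2 * Real.pi * Complex.I * τ)

/-- `σ_k(n) = Σ_{d ∣ n} d^k`, as a complex number. -/
noncomputable def sigmaC (k n : ℕ) : ℂ := ∑ d ∈ n.divisors, (d : ℂ) ^ k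

/-- Eisenstein series `E₂(τ) = 1 - 24 Σ_{n≥1} σ₁(n) qⁿ`. -/
noncomputable def E₂ (τ : ℂ) : ℂ := 1 - 24 * ∑' n : ℕ, sigmaC 1 (n + 1) * qq τ ^ (n + 1)

/-- Eisenstein series `E₄(τ) = 1 + 240 Σ_{n≥1} σ₃(n) qⁿ`. -/
noncomputable def E₄ (τ : ℂ) : ℂ := 1 + 240 * ∑' n : ℕ, sigmaC 3 (n + 1) * qq τ ^ (n + 1)

/-- Eisenstein series `E₆(τ) = 1 - 504 Σ_{n≥1} σ₅(n) qⁿ`. -/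
noncomputable def E₆ (τ : ℂ) : ℂ := 1 - 504 * ∑' n : ℕ, sigmaC 5 (n + 1) * qq τ ^ (n + 1)

/-- Dedekind eta function `η(τ) = exp(πiτ/12) ∏_{n≥1} (1 - qⁿ)`. -/
noncomputable def η (τ : ℂ) : ℂ :=
  Complex.exp (Real.pi * Complex.I * τ / 12) * ∏' n : ℕ, (1 - qq τ ^ (n + 1))

/-- Theta function `θ(τ) = Σ_{n ∈ ℤ} q^{n²}`. -/
noncomputable def θ (τ : ℂ) : ℂ := ∑' n : ℤ, qq τ ^ (n ^ 2)

/-- The character `χ₋₄`: `χ₋₄(d) = 1, -1, 0` according as `d ≡ 1, 3, 0/2 (mod 4)`. -/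
noncomputable def χ₄ (d : ℕ) : ℂ := if d % 4 = 1 then 1 else if d % 4 = 3 then -1 else 0

/-- The character `χ₋₃`: `χ₋₃(d) = 1, -1, 0` according as `d ≡ 1, 2, 0 (mod 3)`. -/
noncomputable def χ₃ (d : ℕ) : ℂ := if d % 3 = 1 then 1 else if d % 3 = 2 then -1 else 0

/-- `E_{1,-4}(τ) = 1/4 + Σ_{n≥1} (Σ_{d∣n} χ₋₄(d)) qⁿ`. -/
noncomputable def E₁₄ (τ : ℂ) : ℂ :=
  1 / 4 + ∑' n : ℕ, (∑ d ∈ (n + 1).divisors, χ₄ d) * qq τ ^ (n + 1)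

/-- `E_{1,-3}(τ) = 1/6 + Σ_{n≥1} (Σ_{d∣n} χ₋₃(d)) qⁿ`. -/
noncomputable def E₁₃ (τ : ℂ) : ℂ :=
  1 / 6 + ∑' n : ℕ, (∑ d ∈ (n + 1).divisors, χ₃ d) * qq τ ^ (n + 1)

/-- `E_{2,2}(τ) = 2E₂(2τ) - E₂(τ)`. -/
noncomputable def E₂₂ (τ : ℂ) : ℂ := 2 * E₂ (2 * τ) - E₂ τ

/-- `E_{2,4}(τ) = (4E₄(2τ) - E₄(τ))/3`. -/
noncomputable def E₂₄ (τ : ℂ) : ℂ := (4 * E₄ (2 * τ) - E₄ τ) / 3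

/-- `E_{3,2}(τ) = (3E₂(3τ) - E₂(τ))/2`. -/
noncomputable def E₃₂ (τ : ℂ) : ℂ := (3 * E₂ (3 * τ) - E₂ τ) / 2

/-- `E_{3,4}(τ) = (9E₄(3τ) - E₄(τ))/8`. -/
noncomputable def E₃₄ (τ : ℂ) : ℂ := (9 * E₄ (3 * τ) - E₄ τ) / 8

/-- `E_{4,2}(τ) = (4E₂(4τ) - E₂(τ))/3`. -/
noncomputable def E₄₂ (τ : ℂ) : ℂ := (4 * E₂ (4 * τ) - E₂ τ) / 3

/-- `E'_{4,2}(τ) = 4E₂(4τ) - 4E₂(2τ) + E₂(τ)`. -/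
noncomputable def E₄₂' (τ : ℂ) : ℂ := 4 * E₂ (4 * τ) - 4 * E₂ (2 * τ) + E₂ τ

/-- `f_{1,j}(τ) = 2E₂(τ) - ((3+(-1)ʲi√3)/6)E₂(τ/2) - ((3-(-1)ʲi√3)/6)E₂((τ+1)/2)`. -/
noncomputable def f₁ (j : ℕ) (τ : ℂ) : ℂ :=
  2 * E₂ τ - ((3 + (-1 : ℂ) ^ j * Complex.I * Real.sqrt 3) / 6) * E₂ (τ / 2)
    - ((3 - (-1 : ℂ) ^ j * Complex.I * Real.sqrt 3) / 6) * E₂ ((τ + 1) / 2)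

/-- `g_{1,j}(τ) = (3/2)E₂(τ) - (1/4) Σ_{0≤m≤2, m≢j (mod 3)} E₂((τ+m)/3)`. -/
noncomputable def g₁ (j : ℕ) (τ : ℂ) : ℂ :=
  (3 / 2) * E₂ τ -
    (1 / 4) * ∑ m ∈ (Finset.range 3).filter (fun m => ¬ m % 3 = j % 3), E₂ ((τ + m) / 3)

/-- `f_{2,j}(τ) = 4E_{1,-4}(τ) + (-1)ʲ·2i·(E_{1,-4}(τ/2) - E_{1,-4}((τ+1)/2))`. -/
noncomputable def f₂ (j : ℕ) (τ : ℂ) : ℂ :=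
  4 * E₁₄ τ + (-1 : ℂ) ^ j * 2 * Complex.I * (E₁₄ (τ / 2) - E₁₄ ((τ + 1) / 2))

/-- `f_{3,j}(τ) = 6E_{1,-3}(2τ) + (-1)ʲ·i√3·(E_{1,-3}(τ/2) - E_{1,-3}((τ+1)/2))`. -/
noncomputable def f₃ (j : ℕ) (τ : ℂ) : ℂ :=
  6 * E₁₃ (2 * τ) +
    (-1 : ℂ) ^ j * Complex.I * Real.sqrt 3 * (E₁₃ (τ / 2) - E₁₃ ((τ + 1) / 2))

/-- `f_{4,j}(τ) = θ(τ/2 - (-1)ʲ/4)`. -/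
noncomputable def f₄ (j : ℕ) (τ : ℂ) : ℂ := θ (τ / 2 - (-1 : ℂ) ^ j / 4)

/-- `g_{4,j}(τ) = 2θ(2τ)² - θ((τ+j)/2)²`. -/
noncomputable def g₄ (j : ℕ) (τ : ℂ) : ℂ := 2 * θ (2 * τ) ^ 2 - θ ((τ + j) / 2) ^ 2

/-- `E_{3,-3,1}(τ) = -1/9 + Σ_{n≥1} (Σ_{d∣n} d²χ₋₃(d)) qⁿ`. -/
noncomputable def E₃₃₁ (τ : ℂ) : ℂ :=
  -(1 / 9) + ∑' n : ℕ, (∑ d ∈ (n + 1).divisors, (d : ℂ) ^ 2 * χ₃ d) * qq τ ^ (n + 1)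

/-- `E_{3,1,-3}(τ) = Σ_{n≥1} (Σ_{d∣n} d²χ₋₃(n/d)) qⁿ`. -/
noncomputable def E₃₁₃ (τ : ℂ) : ℂ :=
  ∑' n : ℕ, (∑ d ∈ (n + 1).divisors, (d : ℂ) ^ 2 * χ₃ ((n + 1) / d)) * qq τ ^ (n + 1)

/-!
In weight `2` and up to quasi-modular corrections, `S : τ ↦ -1/τ` fixes `E₂(τ)` and interchanges
`E₂((τ + 1)/3)` with `E₂((τ + 2)/3)` and `E₂(τ/3)` with `9 E₂(3τ)`. In each `g_{1,j}` the
corrections cancel, so `S` fixes `g_{1,0}`; the Hecke relation at `3`, which expresses `E₂(3τ)`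
through `E₂(τ)` and the `E₂((τ + m)/3)`, shows that it negates `g_{1,1}` and `g_{1,2}`. Since
`T : τ ↦ τ + 1` permutes the three cyclically, their product is a level one modular form of weight
`6` with value `1` at `i∞`, and this is `E₆` because that space is one-dimensional. At the fixed
point `i` of `S`, invariance in weight `2` reads `g_{1,0}(i) = -g_{1,0}(i)`, and the other zeros are
translates of this one.
-/

open Filter Topology ArithmeticFunction
open scoped UpperHalfPlane ModularForm MatrixGroups Manifold ArithmeticFunction.sigma

section DivisorSums

variable {p : ℕ}

lemma sigma_prime_mul_of_not_dvd (hp : p.Prime) (k : ℕ) {n : ℕ} (hn : ¬ p ∣ n) :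
    σ k (p * n) = (1 + p ^ k) * σ k n := by
  rw [isMultiplicative_sigma.map_mul_of_coprime ((hp.coprime_iff_not_dvd).2 hn)]
  have h := sigma_apply_prime_pow (k := k) (i := 1) hp
  rw [pow_one] at h
  simp [h, Finset.sum_range_succ]

lemma sigma_prime_pow_succ (hp : p.Prime) (k i : ℕ) :
    σ k (p ^ (i + 1)) = p ^ k * σ k (p ^ i) + 1 := by
  simp_rw [sigma_apply_prime_pow hp, mul_comm _ k, pow_mul]
  exact geom_sum_succ

lemma sigma_prime_mul_prime_mul (hp : p.Prime) (k n : ℕ) :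
    σ k (p * (p * n)) + p ^ k * σ k n = (1 + p ^ k) * σ k (p * n) := by
  rcases eq_or_ne n 0 with rfl | hn
  · simp
  obtain ⟨i, m, hm, rfl⟩ := Nat.exists_eq_pow_mul_and_not_dvd hn p hp.ne_one
  have hσ (e : ℕ) : σ k (p ^ e * m) = σ k (p ^ e) * σ k m :=
    isMultiplicative_sigma.map_mul_of_coprime (((hp.coprime_iff_not_dvd).2 hm).pow_left e)
  have hmul (e : ℕ) : p * (p ^ e * m) = p ^ (e + 1) * m := by ring
  simp_rw [hmul, hσ, sigma_prime_pow_succ hp]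
  ring

end DivisorSums

lemma sum_primitiveRoot_pow_pow {R : Type*} [CommRing R] [IsDomain R] {ζ : R} {N : ℕ}
    (hζ : IsPrimitiveRoot ζ N) (n : ℕ) :
    ∑ m ∈ Finset.range N, (ζ ^ m) ^ n = if N ∣ n then (N : R) else 0 := by
  simp_rw [pow_right_comm ζ _ n]
  split_ifs with hn
  · simp [(hζ.pow_eq_one_iff_dvd n).2 hn]
  · have hne : ζ ^ n - 1 ≠ 0 := sub_ne_zero.2 fun h => hn ((hζ.pow_eq_one_iff_dvd n).1 h)
    refine (mul_eq_zero.1 (geom_sum_mul (ζ ^ n) N |>.trans ?_)).resolve_right hne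
    rw [pow_right_comm, hζ.pow_eq_one, one_pow, sub_self]

lemma hasSum_ite_dvd_iff {α : Type*} [AddCommMonoid α] [TopologicalSpace α] {N : ℕ} (hN : N ≠ 0)
    {f : ℕ → α} {a : α} :
    HasSum (fun n => if N ∣ n then f n else 0) a ↔ HasSum (fun n => f (N * n)) a := by
  rw [← (mul_right_injective₀ hN).hasSum_iff fun n hn => if_neg fun ⟨m, hm⟩ => hn ⟨m, hm.symm⟩]
  simp [Function.comp_def]

lemma sum_tsum_primitiveRoot_mul {K : Type*} [Field K] [TopologicalSpace K] [IsTopologicalRing K]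
    [T2Space K] {ζ x : K} {N : ℕ} (hN : N ≠ 0) (hζ : IsPrimitiveRoot ζ N) {a : ℕ → K}
    (ha : ∀ m, Summable fun n => a n * (ζ ^ m * x) ^ n) :
    ∑ m ∈ Finset.range N, ∑' n, a n * (ζ ^ m * x) ^ n = N * ∑' n, a (N * n) * (x ^ N) ^ n := by
  have hfilter (n : ℕ) : ∑ m ∈ Finset.range N, a n * (ζ ^ m * x) ^ n =
      if N ∣ n then N * (a n * x ^ n) else 0 := by
    simp_rw [mul_pow, mul_left_comm (a n), ← Finset.sum_mul, sum_primitiveRoot_pow_pow hζ,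
      ite_mul, zero_mul]
  have h := hasSum_sum (s := Finset.range N) fun m _ => (ha m).hasSum
  simp_rw [hfilter, hasSum_ite_dvd_iff hN, pow_mul] at h
  rw [← h.tsum_eq, tsum_mul_left]

/-- The generating function `∑ σ_k(n) xⁿ` of the divisor sums, as a function of the nome `x`: the
nonconstant part of the level one Eisenstein series of weight `k + 1`, up to a scalar. -/
noncomputable def sigmaSeries (k : ℕ) (x : ℂ) : ℂ := ∑' n : ℕ, (σ k n : ℂ) * x ^ n

lemma summable_sigma_mul_pow (k : ℕ) {x : ℂ} (hx : ‖x‖ < 1) :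
    Summable fun n : ℕ => ‖(σ k n : ℂ) * x ^ n‖ := by
  refine Summable.of_nonneg_of_le (fun _ => norm_nonneg _) (fun n => ?_)
    (summable_norm_pow_mul_geometric_of_norm_lt_one (k + 1) hx)
  simp only [norm_mul, norm_pow, Complex.norm_natCast]
  gcongr
  exact_mod_cast sigma_le_pow_succ k n

lemma tsum_sigma_prime_mul {p : ℕ} (hp : p.Prime) (k : ℕ) {x : ℂ} (hx : ‖x‖ < 1) :
    ∑' n, (σ k (p * n) : ℂ) * x ^ n =
      (1 + p ^ k) * sigmaSeries k x - p ^ k * sigmaSeries k (x ^ p) := by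
  have hxp : ‖x ^ p‖ < 1 := by
    rw [norm_pow]
    exact pow_lt_one₀ (norm_nonneg x) hx hp.ne_zero
  have hdvd : HasSum (fun n => if p ∣ n then (σ k (n / p) : ℂ) * x ^ n else 0)
      (sigmaSeries k (x ^ p)) := by
    rw [hasSum_ite_dvd_iff hp.ne_zero]
    simpa only [sigmaSeries, Nat.mul_div_cancel_left _ hp.pos, pow_mul] using
      (summable_sigma_mul_pow k hxp).of_norm.hasSum
  have hall : HasSum (fun n => (σ k n : ℂ) * x ^ n) (sigmaSeries k x) :=
    (summable_sigma_mul_pow k hx).of_norm.hasSum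
  refine (((hall.mul_left _).sub (hdvd.mul_left _)).congr_fun fun n => ?_).tsum_eq
  split_ifs with hn
  · obtain ⟨m, rfl⟩ := hn
    have h : (σ k (p * (p * m)) : ℂ) + p ^ k * σ k m = (1 + p ^ k) * σ k (p * m) :=
      mod_cast sigma_prime_mul_prime_mul hp k m
    rw [Nat.mul_div_cancel_left _ hp.pos]
    linear_combination x ^ (p * m) * h
  · have h : (σ k (p * n) : ℂ) = (1 + p ^ k) * σ k n := mod_cast sigma_prime_mul_of_not_dvd hp k hn
    rw [h]
    ring

lemma sum_sigmaSeries_primitiveRoot_mul {p : ℕ} (hp : p.Prime) {ζ : ℂ} (hζ : IsPrimitiveRoot ζ p)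
    (k : ℕ) {x : ℂ} (hx : ‖x‖ < 1) :
    ∑ m ∈ Finset.range p, sigmaSeries k (ζ ^ m * x) =
      p * ((1 + p ^ k) * sigmaSeries k (x ^ p) - p ^ k * sigmaSeries k ((x ^ p) ^ p)) := by
  have hζx (m : ℕ) : ‖ζ ^ m * x‖ < 1 := by
    simpa [hζ.norm'_eq_one hp.ne_zero] using hx
  have hxp : ‖x ^ p‖ < 1 := by
    rw [norm_pow]
    exact pow_lt_one₀ (norm_nonneg x) hx hp.ne_zero
  rw [← tsum_sigma_prime_mul hp k hxp]
  exact sum_tsum_primitiveRoot_mul hp.ne_zero hζ fun m => (summable_sigma_mul_pow k (hζx m)).of_norm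

lemma continuousAt_sigmaSeries_zero (k : ℕ) : ContinuousAt (sigmaSeries k) 0 := by
  have hball : Metric.closedBall (0 : ℂ) (1 / 2) ∈ 𝓝 0 := Metric.closedBall_mem_nhds 0 (by norm_num)
  refine (continuousOn_tsum (fun n => by fun_prop)
    (summable_sigma_mul_pow k (x := 1 / 2) (by norm_num)) fun n x hx => ?_).continuousAt hball
  rw [norm_mul, norm_mul, norm_pow, norm_pow]
  gcongr
  simpa using hx

lemma sigmaSeries_zero (k : ℕ) : sigmaSeries k 0 = 0 := by
  rw [sigmaSeries, tsum_eq_single 0 fun n hn => by simp [hn]]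
  simp

/-- The level one modular form with underlying function `f`, for `f` invariant under the
generators `S` and `T` of `SL(2, ℤ)`. There is a single cusp, so boundedness is only required at
`i∞`. -/
noncomputable def levelOneModularForm {k : ℤ} (f : ℍ → ℂ) (hS : f ∣[k] ModularGroup.S = f)
    (hT : f ∣[k] ModularGroup.T = f) (hf : MDiff f) (hbdd : UpperHalfPlane.IsBoundedAtImInfty f) :
    ModularForm 𝒮ℒ k where
  toFun := f
  slash_action_eq' := fun _ ⟨γ, hγ⟩ => hγ ▸ SlashInvariantForm.slash_action_generators_SL2Z hS hT γ
  holo' := hf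
  bdd_at_cusps' hc := by
    rw [Subgroup.IsArithmetic.isCusp_iff_isCusp_SL2Z] at hc
    rw [OnePoint.isBoundedAt_iff_forall_SL2Z hc]
    intro γ _
    rwa [SlashInvariantForm.slash_action_generators_SL2Z hS hT γ]

lemma qExpansion_coeff_zero_of_tendsto {k : ℤ} (f : ModularForm 𝒮ℒ k) {c : ℂ}
    (hf : Tendsto f UpperHalfPlane.atImInfty (𝓝 c)) :
    (UpperHalfPlane.qExpansion 1 f).coeff 0 = c := by
  rw [UpperHalfPlane.qExpansion_coeff_zero one_pos
    (ModularFormClass.analyticAt_cuspFunction_zero f one_pos one_mem_strictPeriods_SL)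
    (SlashInvariantFormClass.periodic_comp_ofComplex f one_mem_strictPeriods_SL)]
  exact hf.limUnder_eq

lemma eq_smul_E_of_tendsto {k : ℕ} (hk : 3 ≤ k) (hk2 : Even k)
    (hrank : Module.rank ℂ (ModularForm 𝒮ℒ k) = 1) (f : ModularForm 𝒮ℒ k) {c : ℂ}
    (hf : Tendsto f UpperHalfPlane.atImInfty (𝓝 c)) : f = c • ModularForm.E hk := by
  obtain ⟨a, rfl⟩ := (finrank_eq_one_iff_of_nonzero' _ (EisensteinSeries.E_ne_zero hk hk2)).1
    (Module.rank_eq_one_iff_finrank_eq_one.1 hrank) f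
  have hcoeff := qExpansion_coeff_zero_of_tendsto _ hf
  rw [FunLike.coe_smul, ModularForm.qExpansion_smul one_pos one_mem_strictPeriods_SL,
    PowerSeries.coeff_smul, EisensteinSeries.E_qExpansion_coeff_zero hk hk2, smul_eq_mul,
    mul_one] at hcoeff
  rw [hcoeff]

lemma sigmaC_eq_sigma (k n : ℕ) : sigmaC k n = (σ k n : ℂ) := by
  simp [sigmaC, sigma_apply]

lemma tsum_pnat_sigma (k : ℕ) (x : ℂ) :
    ∑' n : ℕ+, (σ k n : ℂ) * x ^ (n : ℕ) = sigmaSeries k x :=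
  tsum_pnat_eq_tsum_of_eq_zero (f := fun n => (σ k n : ℂ) * x ^ n) (by simp)

lemma tsum_sigmaC_succ (k : ℕ) (x : ℂ) :
    ∑' n : ℕ, sigmaC k (n + 1) * x ^ (n + 1) = sigmaSeries k x := by
  simp_rw [sigmaC_eq_sigma, ← tsum_pnat_sigma]
  exact (tsum_pnat_eq_tsum_succ (f := fun n => (σ k n : ℂ) * x ^ n)).symm

lemma E₂_eq_sigmaSeries (τ : ℂ) : E₂ τ = 1 - 24 * sigmaSeries 1 (qq τ) := by
  rw [E₂, tsum_sigmaC_succ]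

lemma E₂_coe (z : ℍ) : E₂ z = EisensteinSeries.E2 z := by
  rw [EisensteinSeries.E2_eq_tsum_cexp, tsum_pnat_sigma, E₂_eq_sigmaSeries, qq]

lemma E₆_coe (z : ℍ) : E₆ z = ModularForm.E₆ z := by
  have h := EisensteinSeries.q_expansion_bernoulli (k := 6) (by norm_num) ⟨3, rfl⟩ z
  simp_rw [zpow_natCast] at h
  rw [tsum_pnat_sigma, show bernoulli 6 = 1 / 42 by decide +kernel] at h
  rw [h, E₆, tsum_sigmaC_succ, qq]
  norm_num

lemma norm_qq (τ : ℂ) : ‖qq τ‖ = Real.exp (-(2 * Real.pi * τ.im)) := by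
  simp [qq, Complex.norm_exp]

lemma norm_qq_lt_one {τ : ℂ} (hτ : 0 < τ.im) : ‖qq τ‖ < 1 := by
  rw [norm_qq, Real.exp_lt_one_iff, neg_lt_zero]
  exact mul_pos Real.two_pi_pos hτ

lemma qq_add (a b : ℂ) : qq (a + b) = qq a * qq b := by
  simp [qq, mul_add, Complex.exp_add]

lemma qq_nat_mul (n : ℕ) (a : ℂ) : qq (n * a) = qq a ^ n := by
  rw [qq, qq, ← Complex.exp_nat_mul]
  ring_nf

lemma isPrimitiveRoot_qq_one_div {N : ℕ} (hN : N ≠ 0) : IsPrimitiveRoot (qq (1 / N)) N := by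
  simpa [qq, div_eq_mul_inv] using Complex.isPrimitiveRoot_exp N hN

lemma E₂_periodic : Function.Periodic E₂ 1 := fun τ => by
  have h : qq 1 = 1 := by simp [qq]
  simp only [E₂, qq_add, h, mul_one]

lemma E₂_add_div_periodic {N : ℕ} (hN : N ≠ 0) (τ : ℂ) :
    Function.Periodic (fun m : ℕ => E₂ ((τ + m) / N)) N := fun m => by
  have hN0 : (N : ℂ) ≠ 0 := mod_cast hN
  simp only [Nat.cast_add, ← add_assoc, add_div _ (N : ℂ) (N : ℂ), div_self hN0, E₂_periodic _]

lemma E₂_hecke {p : ℕ} (hp : p.Prime) {τ : ℂ} (hτ : 0 < τ.im) :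
    p ^ 2 * E₂ (p * τ) + ∑ m ∈ Finset.range p, E₂ ((τ + m) / p) = p * (p + 1) * E₂ τ := by
  have hp0 : (p : ℂ) ≠ 0 := mod_cast hp.ne_zero
  have hq : qq (τ / p) ^ p = qq τ := by rw [← qq_nat_mul, mul_div_cancel₀ _ hp0]
  have hshift (m : ℕ) : qq ((τ + m) / p) = qq (1 / p) ^ m * qq (τ / p) := by
    rw [← qq_nat_mul, ← qq_add]
    ring_nf
  have hτp : 0 < (τ / p).im := by
    rw [Complex.div_natCast_im]
    exact div_pos hτ (mod_cast hp.pos)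
  have h := sum_sigmaSeries_primitiveRoot_mul hp (isPrimitiveRoot_qq_one_div hp.ne_zero) 1
    (norm_qq_lt_one hτp)
  rw [hq] at h
  simp_rw [E₂_eq_sigmaSeries, hshift, Finset.sum_sub_distrib, ← Finset.mul_sum, h, qq_nat_mul,
    Finset.sum_const, Finset.card_range, nsmul_eq_mul]
  ring

lemma differentiableAt_E₂ {τ : ℂ} (hτ : 0 < τ.im) : DifferentiableAt ℂ E₂ τ := by
  have hU : {z : ℂ | 0 < z.im} ∈ 𝓝 τ := UpperHalfPlane.isOpen_upperHalfPlaneSet.mem_nhds hτ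
  refine ((UpperHalfPlane.mdifferentiable_iff.1 E2_mdifferentiable).differentiableAt
    hU).congr_of_eventuallyEq ?_
  filter_upwards [hU] with z hz
  rw [Function.comp_apply, ← E₂_coe, UpperHalfPlane.ofComplex_apply_of_im_pos hz]

lemma tendsto_qq : Tendsto qq (comap im atTop) (𝓝 0) := by
  rw [tendsto_zero_iff_norm_tendsto_zero]
  simp_rw [norm_qq]
  exact Real.tendsto_exp_neg_atTop_nhds_zero.comp
    (tendsto_comap.const_mul_atTop Real.two_pi_pos)

lemma tendsto_E₂ : Tendsto E₂ (comap im atTop) (𝓝 1) := by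
  have h : Tendsto (sigmaSeries 1 ∘ qq) (comap im atTop) (𝓝 0) := by
    simpa only [sigmaSeries_zero] using (continuousAt_sigmaSeries_zero 1).tendsto.comp tendsto_qq
  simpa [funext E₂_eq_sigmaSeries] using! (h.const_mul 24).const_sub 1

lemma tendsto_E₂_add_div {N : ℕ} (hN : N ≠ 0) (m : ℕ) :
    Tendsto (fun τ : ℂ => E₂ ((τ + m) / N)) (comap im atTop) (𝓝 1) := by
  refine tendsto_E₂.comp (tendsto_comap_iff.2 ?_)
  have him : im ∘ (fun τ : ℂ => (τ + m) / N) = fun τ : ℂ => τ.im / N := by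
    ext τ
    simp [Complex.div_natCast_im]
  rw [him]
  exact tendsto_comap.atTop_div_const (mod_cast Nat.pos_of_ne_zero hN)

lemma E₂_moebius {a b c d : ℤ} (hdet : a * d - b * c = 1) {τ : ℂ} (hτ : 0 < τ.im) :
    E₂ ((a * τ + b) / (c * τ + d)) =
      (c * τ + d) ^ 2 * E₂ τ + 6 * c * (c * τ + d) / (Real.pi * I) := by
  let γ : SL(2, ℤ) := ⟨!![a, b; c, d], by simpa [Matrix.det_fin_two] using hdet⟩
  let z : ℍ := ⟨τ, hτ⟩
  have hden : UpperHalfPlane.denom γ z = c * τ + d := by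
    rw [ModularGroup.denom_apply]
    simp [γ, z]
  have hne : (c * τ + d : ℂ) ≠ 0 := hden ▸ UpperHalfPlane.denom_ne_zero γ z
  have hsmul : ((γ • z : ℍ) : ℂ) = (a * τ + b) / (c * τ + d) := by
    rw [UpperHalfPlane.coe_specialLinearGroup_apply]
    simp [γ, z]
  have h := congrFun (EisensteinSeries.E2_slash_action γ) z
  rw [ModularForm.SL_slash_apply, ← E₂_coe, hden, hsmul, zpow_neg, ← div_eq_mul_inv,
    div_eq_iff (zpow_ne_zero _ hne)] at h
  rw [h]
  simp only [Pi.sub_apply, Pi.smul_apply, smul_eq_mul, ← E₂_coe, EisensteinSeries.D2, hden,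
    riemannZeta_two, show (γ 1 0 : ℤ) = c from rfl, z]
  field_simp
  linear_combination (-6 * c) * I_sq

lemma E₂_neg_one_div {τ : ℂ} (hτ : 0 < τ.im) :
    E₂ (-1 / τ) = τ ^ 2 * E₂ τ + 6 * τ / (Real.pi * I) := by
  simpa using E₂_moebius (a := 0) (b := -1) (c := 1) (d := 0) (by norm_num) hτ

lemma E₂_mul_neg_one_div {N : ℕ} (hN : N ≠ 0) {τ : ℂ} (hτ : 0 < τ.im) :
    E₂ (N * (-1 / τ)) = (τ / N) ^ 2 * E₂ (τ / N) + 6 * (τ / N) / (Real.pi * I) := by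
  have hτN : 0 < (τ / N).im := by
    rw [Complex.div_natCast_im]
    exact div_pos hτ (mod_cast Nat.pos_of_ne_zero hN)
  rw [← E₂_neg_one_div hτN, div_div_eq_mul_div, mul_div_assoc', mul_comm]

lemma E₂_neg_one_div_add_div {N : ℕ} (hN : N ≠ 0) {m m' : ℤ} (hm : (N : ℤ) ∣ m * m' + 1) {τ : ℂ}
    (hτ : 0 < τ.im) :
    E₂ ((-1 / τ + m) / N) = τ ^ 2 * E₂ ((τ + m') / N) + 6 * N * τ / (Real.pi * I) := by
  obtain ⟨r, hr⟩ := hm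
  have hN0 : (N : ℂ) ≠ 0 := mod_cast hN
  have hτ0 : τ ≠ 0 := ne_of_apply_ne im hτ.ne'
  have hw : 0 < ((τ + m') / N).im := by
    rw [Complex.div_natCast_im, add_im, intCast_im, add_zero]
    exact div_pos hτ (mod_cast Nat.pos_of_ne_zero hN)
  have hden : ((N : ℤ) : ℂ) * ((τ + m') / N) + (-m' : ℤ) = τ := by
    push_cast
    field_simp
    ring
  have hnum : (m * ((τ + m') / N) + (-r : ℤ)) / τ = (-1 / τ + m) / N := by
    have hdet : (m * m' + 1 : ℂ) = N * r := mod_cast hr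
    push_cast
    field_simp
    linear_combination hdet
  -- The matrix `(m, -r; N, -m')` sends `(τ + m') / N` to `(-1 / τ + m) / N`.
  have h := E₂_moebius (a := m) (b := -r) (c := N) (d := -m') (by linear_combination -hr) hw
  rw [hden, hnum] at h
  simpa using h

lemma g₁_eq_sub_sum (j : ℕ) (τ : ℂ) :
    g₁ j τ = 3 / 2 * E₂ τ -
      1 / 4 * (∑ m ∈ Finset.range 3, E₂ ((τ + m) / 3) - E₂ ((τ + j) / 3)) := by
  have hfilter : (Finset.range 3).filter (fun m => m % 3 = j % 3) = {j % 3} := by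
    ext m
    simp only [Finset.mem_filter, Finset.mem_range, Finset.mem_singleton]
    omega
  have hmod : E₂ ((τ + (j % 3 : ℕ)) / 3) = E₂ ((τ + j) / 3) :=
    (E₂_add_div_periodic three_ne_zero τ).map_mod_nat j
  rw [g₁, ← Finset.sum_filter_add_sum_filter_not (Finset.range 3) (fun m => m % 3 = j % 3),
    hfilter, Finset.sum_singleton, hmod, add_sub_cancel_left]

lemma g₁_eq_of_im_pos (j : ℕ) {τ : ℂ} (hτ : 0 < τ.im) :
    g₁ j τ = 9 / 4 * E₂ (3 * τ) - 3 / 2 * E₂ τ + 1 / 4 * E₂ ((τ + j) / 3) := by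
  have h := E₂_hecke Nat.prime_three hτ
  push_cast at h
  rw [g₁_eq_sub_sum]
  linear_combination (-1 / 4) * h

lemma g₁_add_one (j : ℕ) (τ : ℂ) : g₁ j (τ + 1) = g₁ (j + 1) τ := by
  let F : ℕ → ℂ := fun m => E₂ ((τ + m) / 3)
  have hF (m : ℕ) : E₂ ((τ + 1 + m) / 3) = F (m + 1) := by
    simp only [F, Nat.cast_add_one, add_assoc, add_comm (1 : ℂ)]
  have hsum : ∑ m ∈ Finset.range 3, F (m + 1) = ∑ m ∈ Finset.range 3, F m := by
    have hper : F 3 = F 0 := E₂_add_div_periodic three_ne_zero τ 0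
    rw [← add_right_cancel_iff (a := F 0), ← Finset.sum_range_succ', Finset.sum_range_succ, hper]
  simp only [g₁_eq_sub_sum, E₂_periodic τ, hF, hsum, F]

lemma g₁_periodic (τ : ℂ) : Function.Periodic (fun j => g₁ j τ) 3 := fun j => by
  have hper := E₂_add_div_periodic three_ne_zero τ j
  push_cast at hper
  simp only [g₁_eq_sub_sum, Nat.cast_add, Nat.cast_ofNat, hper]

lemma g₁_eq_g₁_zero_add (j : ℕ) (τ : ℂ) : g₁ j τ = g₁ 0 (τ + j) := by
  induction j generalizing τ with
  | zero => simp
  | succ j ih => rw [← g₁_add_one, ih, Nat.cast_succ, add_right_comm, add_assoc]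

lemma g₁_zero_neg_one_div {τ : ℂ} (hτ : 0 < τ.im) : g₁ 0 (-1 / τ) = τ ^ 2 * g₁ 0 τ := by
  have h₁ := E₂_neg_one_div_add_div three_ne_zero (m := 1) (m' := 2) (by norm_num) hτ
  have h₂ := E₂_neg_one_div_add_div three_ne_zero (m := 2) (m' := 1) (by norm_num) hτ
  simp only [g₁_eq_sub_sum, Finset.sum_range_succ, Finset.sum_range_zero, E₂_neg_one_div hτ]
  push_cast at h₁ h₂ ⊢
  rw [h₁, h₂]
  ring

lemma g₁_neg_one_div {j : ℕ} (hj : j = 1 ∨ j = 2) {τ : ℂ} (hτ : 0 < τ.im) :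
    g₁ j (-1 / τ) = -τ ^ 2 * g₁ j τ := by
  have hS : 0 < (-1 / τ).im := by simpa using UpperHalfPlane.im_pnat_div_pos 1 ⟨τ, hτ⟩
  have h₃ := E₂_mul_neg_one_div three_ne_zero hτ
  have hsum {j' : ℕ} (hjj' : 3 ∣ j * j' + 1) : g₁ j (-1 / τ) =
      τ ^ 2 * (1 / 4 * E₂ (τ / 3) - 3 / 2 * E₂ τ + 1 / 4 * E₂ ((τ + j') / 3)) := by
    have h := E₂_neg_one_div_add_div three_ne_zero (m := j) (m' := j') (mod_cast hjj') hτ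
    push_cast at h h₃
    rw [g₁_eq_of_im_pos j hS, h₃, E₂_neg_one_div hτ, h]
    ring
  rcases hj with rfl | rfl
  · rw [hsum (j' := 2) (by norm_num), g₁_eq_sub_sum]
    simp only [Finset.sum_range_succ, Finset.sum_range_zero]
    push_cast
    ring_nf
  · rw [hsum (j' := 1) (by norm_num), g₁_eq_sub_sum]
    simp only [Finset.sum_range_succ, Finset.sum_range_zero]
    push_cast
    ring_nf

lemma g₁_zero_I : g₁ 0 I = 0 := by
  have h := g₁_zero_neg_one_div (τ := I) (by simp)
  rw [show (-1 / I : ℂ) = I by field_simp; simp, I_sq] at h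
  linear_combination h / 2

lemma differentiableAt_g₁ (j : ℕ) {τ : ℂ} (hτ : 0 < τ.im) : DifferentiableAt ℂ (g₁ j) τ := by
  refine ((differentiableAt_E₂ hτ).const_mul _).sub
    ((DifferentiableAt.fun_sum fun m _ => ?_).const_mul _)
  exact DifferentiableAt.comp (g := E₂) τ (differentiableAt_E₂ (by simpa using hτ)) (by fun_prop)

lemma tendsto_g₁ (j : ℕ) : Tendsto (g₁ j) (comap im atTop) (𝓝 1) := by
  have hE (m : ℕ) : Tendsto (fun τ : ℂ => E₂ ((τ + m) / 3)) (comap im atTop) (𝓝 1) :=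
    tendsto_E₂_add_div three_ne_zero m
  have h := (tendsto_E₂.const_mul (3 / 2)).sub
    (((tendsto_finsetSum (Finset.range 3) fun m _ => hE m).sub (hE j)).const_mul (1 / 4))
  have hlim : (3 / 2 * 1 - 1 / 4 * (∑ _m ∈ Finset.range 3, 1 - 1) : ℂ) = 1 := by norm_num
  rw [hlim] at h
  exact h.congr fun τ => (g₁_eq_sub_sum j τ).symm

/-- The product `g_{1,0} g_{1,1} g_{1,2}` on the upper half plane. -/
noncomputable def prodG₁ (z : ℍ) : ℂ := g₁ 0 z * g₁ 1 z * g₁ 2 z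

lemma slash_S_prodG₁ : prodG₁ ∣[(6 : ℤ)] ModularGroup.S = prodG₁ := by
  ext z
  have hz : (z : ℂ) ≠ 0 := z.ne_zero
  have hS : ((-z : ℂ)⁻¹) = -1 / z := by field_simp
  rw [SlashInvariantForm.slash_S_apply]
  simp only [prodG₁, hS, g₁_zero_neg_one_div z.im_pos, g₁_neg_one_div (.inl rfl) z.im_pos,
    g₁_neg_one_div (.inr rfl) z.im_pos]
  rw [zpow_neg]
  field_simp

lemma slash_T_prodG₁ : prodG₁ ∣[(6 : ℤ)] ModularGroup.T = prodG₁ := by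
  ext z
  have h₃ : g₁ 3 z = g₁ 0 z := g₁_periodic z 0
  have hdenom : UpperHalfPlane.denom ModularGroup.T z = 1 := by
    rw [ModularGroup.denom_apply]
    simp [ModularGroup.T]
  rw [ModularForm.SL_slash_apply, UpperHalfPlane.modular_T_smul, hdenom, one_zpow, mul_one]
  simp only [prodG₁, UpperHalfPlane.coe_vadd, ofReal_one, add_comm (1 : ℂ), g₁_add_one, zero_add,
    Nat.reduceAdd, h₃]
  ring

lemma mdifferentiable_prodG₁ : MDiff prodG₁ := by
  have h (j : ℕ) : MDiff fun z : ℍ => g₁ j z := UpperHalfPlane.mdifferentiable_iff.2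
    fun z (hz : 0 < z.im) => (differentiableAt_g₁ j hz).differentiableWithinAt.congr
      (fun w hw => by simp [UpperHalfPlane.ofComplex_apply_of_im_pos hw])
      (by simp [UpperHalfPlane.ofComplex_apply_of_im_pos hz])
  exact ((h 0).mul (h 1)).mul (h 2)

lemma tendsto_prodG₁ : Tendsto prodG₁ UpperHalfPlane.atImInfty (𝓝 1) := by
  simpa using! (((tendsto_g₁ 0).mul (tendsto_g₁ 1)).mul (tendsto_g₁ 2)).comp
    UpperHalfPlane.tendsto_coe_atImInfty

lemma prodG₁_eq_E₆ (z : ℍ) : prodG₁ z = E₆ z := by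
  let G : ModularForm 𝒮ℒ 6 := levelOneModularForm _ slash_S_prodG₁ slash_T_prodG₁
    mdifferentiable_prodG₁ (tendsto_prodG₁.isBigO_one ℝ)
  have hG : G = (1 : ℂ) • ModularForm.E₆ := eq_smul_E_of_tendsto (k := 6) (by norm_num) ⟨3, rfl⟩
    ModularForm.levelOne_weight_six_rank_one G tendsto_prodG₁
  rw [E₆_coe, ← one_smul ℂ ModularForm.E₆, ← hG]
  rfl

theorem stmt5 :
    (∀ τ : ℂ, 0 < τ.im → g₁ 0 τ * g₁ 1 τ * g₁ 2 τ = E₆ τ) ∧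
    (∀ j : ℕ, j < 3 → g₁ j (-(j : ℂ) + Complex.I) = 0) ∧
    (∀ τ : ℂ, 0 < τ.im → g₁ 0 (-1 / τ) = τ ^ 2 * g₁ 0 τ) ∧
    (∀ j : ℕ, (j = 1 ∨ j = 2) → ∀ τ : ℂ, 0 < τ.im → g₁ j (-1 / τ) = -τ ^ 2 * g₁ j τ) := by
  refine ⟨fun τ hτ => prodG₁_eq_E₆ ⟨τ, hτ⟩, fun j _ => ?_, fun _ hτ => g₁_zero_neg_one_div hτ,
    fun _ hj _ hτ => g₁_neg_one_div hj hτ⟩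
  rw [g₁_eq_g₁_zero_add, neg_add_cancel_comm, g₁_zero_I]
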